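/- Suppose a is contained in the Jacobson radical of R and c := cd(a,M) = ara(a,M) > 0. If for every generating set {b_1,...,b_t} of a the canonical map λ^i_M : H^i(b_1,...,b_t; M) → H^i_a(M) from Koszul cohomology to local cohomology is surjective for all 0 ≤ i ≤ c-1, then M is a-relative Buchsbaum. -/

import Mathlib

/-!
Formalization of a statement from "A theory of relative generalized Cohen-Macaulay modules"
by Divaani-Aazar, Ghanbari Doust, Tousi and Zakeri.

Throughout, `R` is a commutative Noetherian ring and `M` a finitely generated `R`-module.
Conventions used below:
* `locH I i M` is the local cohomology module `H^i_I(M)` (Mathlib's `localCohomology`).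
* Conditions `cd(I,M) = c`, `ara(I,M) = n`, `f_I(M) = f`, `grade(I,M) = r` are expressed by
  the predicates `IsCd`, `IsAra`, `IsFinDim`, `IsGrade`.
* Sequences are given as functions `Fin r → R`; `pSpan M x i = ⟨x_0,…,x_{i-1}⟩M`.
* Koszul (co)homology is defined via the explicit (co)chain complex on the `p`-element
  subsets of `{0,…,n-1}`, and the canonical map `λ^i` into local cohomology is the structure
  map (at exponent 1) into the direct limit of Koszul cohomologies of powers of the sequence,
  which is the realization of `H^i_{⟨x⟩}(M)` used in the paper (2.1(iv)).
-/

open CategoryTheory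

noncomputable section

variable {R : Type} [CommRing R]

/-! ### Sequences: prefix spans, weak sequences, filter regular sequences, d-sequences -/

/-- `pSpan M x i` is the submodule `⟨x_0, …, x_{i-1}⟩M` of `M`. -/
def pSpan (M : Type) [AddCommGroup M] [Module R M] {r : ℕ} (x : Fin r → R) (i : Fin r) :
    Submodule R M :=
  Ideal.span (x '' {j | j < i}) • (⊤ : Submodule R M)

/-- `x_1, …, x_r` is an `I`-weak sequence on `M`:
`(⟨x_1,…,x_{i-1}⟩M :_M x_i) ⊆ (⟨x_1,…,x_{i-1}⟩M :_M I)` for all `i`. -/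
def IsWeakSeq (I : Ideal R) (M : Type) [AddCommGroup M] [Module R M] {r : ℕ}
    (x : Fin r → R) : Prop :=
  ∀ i : Fin r, ∀ m : M, x i • m ∈ pSpan M x i → ∀ a ∈ I, a • m ∈ pSpan M x i

/-- `x_1, …, x_r` is an `I`-filter regular sequence on `M`:
`(⟨x_1,…,x_{i-1}⟩M :_M x_i) ⊆ ⋃ₜ (⟨x_1,…,x_{i-1}⟩M :_M I^t)` for all `i`. -/
def IsFilterRegSeq (I : Ideal R) (M : Type) [AddCommGroup M] [Module R M] {r : ℕ}
    (x : Fin r → R) : Prop :=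
  ∀ i : Fin r, ∀ m : M, x i • m ∈ pSpan M x i →
    ∃ t : ℕ, ∀ a ∈ I ^ t, a • m ∈ pSpan M x i

/-- An unconditioned `I`-filter regular sequence: filter regular in any order. -/
def IsUncondFilterRegSeq (I : Ideal R) (M : Type) [AddCommGroup M] [Module R M] {r : ℕ}
    (x : Fin r → R) : Prop :=
  ∀ σ : Equiv.Perm (Fin r), IsFilterRegSeq I M (x ∘ σ)

/-- An unconditioned `I`-weak sequence: all positive powers, in any order, form an
`I`-weak sequence. -/
def IsUncondWeakSeq (I : Ideal R) (M : Type) [AddCommGroup M] [Module R M] {r : ℕ}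
    (x : Fin r → R) : Prop :=
  ∀ σ : Equiv.Perm (Fin r), ∀ α : Fin r → ℕ, (∀ k, 0 < α k) →
    IsWeakSeq I M fun k => x (σ k) ^ α k

/-- `x_1, …, x_r` is a d-sequence on `M`:
`(⟨x_1,…,x_{i-1}⟩M :_M x_i x_j) = (⟨x_1,…,x_{i-1}⟩M :_M x_j)` for all `i ≤ j`. -/
def IsDSeq (M : Type) [AddCommGroup M] [Module R M] {r : ℕ} (x : Fin r → R) : Prop :=
  ∀ i j : Fin r, i ≤ j → ∀ m : M,
    ((x i * x j) • m ∈ pSpan M x i ↔ x j • m ∈ pSpan M x i)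

/-- An u.s.d-sequence on `M`: all positive powers, in any order, form a d-sequence. -/
def IsUSDSeq (M : Type) [AddCommGroup M] [Module R M] {r : ℕ} (x : Fin r → R) : Prop :=
  ∀ σ : Equiv.Perm (Fin r), ∀ α : Fin r → ℕ, (∀ k, 0 < α k) →
    IsDSeq M fun k => x (σ k) ^ α k

/-! ### Local cohomology, cohomological dimension, arithmetic rank -/

/-- The `i`-th local cohomology module `H^i_I(M)`. -/
abbrev locH (I : Ideal R) (i : ℕ) (M : Type) [AddCommGroup M] [Module R M] : ModuleCat R :=
  (localCohomology I i).obj (ModuleCat.of R M)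

/-- `cd(I, M) = c`: the cohomological dimension of `I` on `M` equals `c`, i.e.
`H^c_I(M) ≠ 0` and `H^i_I(M) = 0` for all `i > c`. -/
def IsCd (I : Ideal R) (M : Type) [AddCommGroup M] [Module R M] (c : ℕ) : Prop :=
  Nontrivial (locH I c M) ∧ ∀ i : ℕ, c < i → Subsingleton (locH I i M)

/-- `f_I(M) = f`: the `I`-finiteness dimension of `M` equals `f`, i.e. `f` is the least
integer such that `H^f_I(M)` is not finitely generated. -/
def IsFinDim (I : Ideal R) (M : Type) [AddCommGroup M] [Module R M] (f : ℕ) : Prop :=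
  (∀ i : ℕ, i < f → Module.Finite R (locH I i M)) ∧ ¬ Module.Finite R (locH I f M)

/-- `M` is `I`-relative generalized Cohen-Macaulay: `cd(I,M) ≤ 0` or `cd(I,M) = f_I(M)`. -/
def IsRelGCM (I : Ideal R) (M : Type) [AddCommGroup M] [Module R M] : Prop :=
  (∀ i : ℕ, 0 < i → Subsingleton (locH I i M)) ∨
    ∃ c : ℕ, IsCd I M c ∧ IsFinDim I M c

/-- `ara(I, M) = n`: the arithmetic rank of `I` with respect to `M` equals `n`, i.e. `n` is the
least integer such that there are `x_1, …, x_n ∈ R` with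
`Rad(⟨x_1,…,x_n⟩ + Ann M) = Rad(I + Ann M)`. -/
def IsAra (I : Ideal R) (M : Type) [AddCommGroup M] [Module R M] (n : ℕ) : Prop :=
  IsLeast {k : ℕ | ∃ x : Fin k → R,
    (Ideal.span (Set.range x) + Module.annihilator R M).radical
      = (I + Module.annihilator R M).radical} n

/-- `x_1, …, x_c` is an `I`-relative system of parameters of `M` (where `c = cd(I,M)`):
the `x_i` lie in `I` and `Rad(⟨x_1,…,x_c⟩ + Ann M) = Rad(I + Ann M)`. -/
def IsRsop (I : Ideal R) (M : Type) [AddCommGroup M] [Module R M] {c : ℕ}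
    (x : Fin c → R) : Prop :=
  (∀ j, x j ∈ I) ∧
    (Ideal.span (Set.range x) + Module.annihilator R M).radical
      = (I + Module.annihilator R M).radical

/-! ### Relative Buchsbaum and relative quasi Buchsbaum modules -/

/-- `M` is `I`-relative Buchsbaum: `cd(I,M) = ara(I,M)` and every `I`-relative system of
parameters of `M` is an `I`-weak sequence on `M`. -/
def IsRelBuchsbaum (I : Ideal R) (M : Type) [AddCommGroup M] [Module R M] : Prop :=
  ∃ c : ℕ, IsCd I M c ∧ IsAra I M c ∧
    ∀ x : Fin c → R, IsRsop I M x → IsWeakSeq I M x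

/-- `M` is `I`-relative quasi Buchsbaum: `cd(I,M) = ara(I,M)` and every `I`-relative system of
parameters of `M` contained in `I²` is an `I`-weak sequence on `M`. -/
def IsRelQuasiBuchsbaum (I : Ideal R) (M : Type) [AddCommGroup M] [Module R M] : Prop :=
  ∃ c : ℕ, IsCd I M c ∧ IsAra I M c ∧
    ∀ x : Fin c → R, IsRsop I M x → (∀ j, x j ∈ I ^ 2) → IsWeakSeq I M x

/-! ### Koszul cochain complexes, Koszul cohomology, and the canonical maps
`λ^i_M : H^i(x; M) → H^i_{⟨x⟩}(M)` -/

/-- The degree `p` term of the Koszul cochain complex of `M` on `n` elements: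
functions on the `p`-element subsets of `{1, …, n}` with values in `M`
(i.e. `Hom(Λ^p R^n, M)`). -/
abbrev KM (M : Type) (n p : ℕ) : Type := {s : Finset (Fin n) // s.card = p} → M

section Koszul

variable {M : Type} [AddCommGroup M] [Module R M]

/-- The Koszul cochain differential `K^p(x; M) → K^{p+1}(x; M)`. -/
def kd {n : ℕ} (x : Fin n → R) (p : ℕ) : KM M n p →ₗ[R] KM M n (p + 1) where
  toFun f t := ∑ j ∈ t.1.attach,
    ((-1 : R) ^ (t.1.filter (fun a => a < j.1)).card * x j.1) •
      f ⟨t.1.erase j.1, by rw [Finset.card_erase_of_mem j.2, t.2]; omega⟩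
  map_add' f g := by
    funext t
    simp [smul_add, Finset.sum_add_distrib]
  map_smul' r f := by
    funext t
    simp [Finset.smul_sum, smul_comm r]

/-- The transition map of Koszul cochain complexes raising the exponent of the defining
sequence by `e`: in degree `p` it multiplies the component at a subset `s`
by `(∏_{j ∈ s} x_j)^e`. -/
def kt {n : ℕ} (x : Fin n → R) (e p : ℕ) : KM M n p →ₗ[R] KM M n p where
  toFun f s := (∏ j ∈ s.1, x j) ^ e • f s
  map_add' f g := by funext s; simp [smul_add]
  map_smul' r f := by funext s; simp [smul_comm r]

/-- The transition maps are maps of cochain complexes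
`K^•(x^u; M) → K^•(x^{u+e}; M)`. -/
theorem kt_kd {n : ℕ} (x : Fin n → R) (u e p : ℕ) :
    (kt (M := M) x e (p + 1)).comp (kd (fun j => x j ^ u) p)
      = (kd (fun j => x j ^ (u + e)) p).comp (kt x e p) := by
  apply LinearMap.ext; intro f
  funext t
  simp only [LinearMap.comp_apply, kd, kt, LinearMap.coe_mk, AddHom.coe_mk]
  rw [Finset.smul_sum]
  refine Finset.sum_congr rfl fun j _ => ?_
  rw [smul_smul, smul_smul]
  congr 1
  rw [← Finset.mul_prod_erase t.1 x j.2]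
  ring

end Koszul

/-- The `R`-module of Koszul `p`-cocycles of `M` with respect to `y`. -/
def kZ {n : ℕ} (y : Fin n → R) (M : Type) [AddCommGroup M] [Module R M] (p : ℕ) :
    Submodule R (KM M n p) :=
  LinearMap.ker (kd y p)

/-- The `R`-module of Koszul `p`-coboundaries of `M` with respect to `y`. -/
def kB {n : ℕ} (y : Fin n → R) (M : Type) [AddCommGroup M] [Module R M] :
    (p : ℕ) → Submodule R (KM M n p)
  | 0 => ⊥
  | (q + 1) => LinearMap.range (kd y q)

/-- The `p`-th Koszul cohomology module `H^p(y; M)`: cocycles modulo coboundaries. -/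
abbrev Hk {n : ℕ} (y : Fin n → R) (M : Type) [AddCommGroup M] [Module R M] (p : ℕ) :=
  kZ y M p ⧸ ((kB y M p ⊓ kZ y M p).comap (kZ y M p).subtype)

section KoszulMaps

variable {M : Type} [AddCommGroup M] [Module R M]

theorem kt_mem_kZ {n : ℕ} (x : Fin n → R) {u v : ℕ} (h : u ≤ v) (p : ℕ) :
    ∀ f ∈ kZ (fun j => x j ^ (u + 1)) M p,
      kt x (v - u) p f ∈ kZ (fun j => x j ^ (v + 1)) M p := by
  intro f hf
  have he : u + 1 + (v - u) = v + 1 := by omega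
  have hc := congrArg (fun φ => φ f) (kt_kd (M := M) x (u + 1) (v - u) p)
  simp only [LinearMap.comp_apply] at hc
  rw [he] at hc
  simp only [kZ, LinearMap.mem_ker] at hf ⊢
  rw [← hc, hf, map_zero]

theorem kt_mem_kB {n : ℕ} (x : Fin n → R) {u v : ℕ} (h : u ≤ v) (p : ℕ) :
    ∀ f ∈ kB (fun j => x j ^ (u + 1)) M p,
      kt x (v - u) p f ∈ kB (fun j => x j ^ (v + 1)) M p := by
  intro f hf
  cases p with
  | zero =>
      simp only [kB, Submodule.mem_bot] at hf ⊢
      rw [hf, map_zero]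
  | succ q =>
      simp only [kB, LinearMap.mem_range] at hf ⊢
      obtain ⟨g, hg⟩ := hf
      refine ⟨kt x (v - u) q g, ?_⟩
      have he : u + 1 + (v - u) = v + 1 := by omega
      have hc := congrArg (fun φ => φ g) (kt_kd (M := M) x (u + 1) (v - u) q)
      simp only [LinearMap.comp_apply] at hc
      rw [he] at hc
      rw [← hc, hg]

end KoszulMaps

/-- The map `H^p(x^{u+1}; M) → H^p(x^{v+1}; M)`, `u ≤ v`, induced by the transition map of
Koszul cochain complexes. -/
def ktH {n : ℕ} (x : Fin n → R) (M : Type) [AddCommGroup M] [Module R M] (p : ℕ)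
    (u v : ℕ) (h : u ≤ v) :
    Hk (fun j => x j ^ (u + 1)) M p →ₗ[R] Hk (fun j => x j ^ (v + 1)) M p :=
  Submodule.mapQ _ _ ((kt x (v - u) p).restrict (kt_mem_kZ x h p)) (by
    rintro ⟨f, hfZ⟩ hfN
    simp only [Submodule.mem_comap, Submodule.mem_inf, Submodule.coe_subtype] at hfN ⊢
    exact ⟨kt_mem_kB x h p f hfN.1, kt_mem_kZ x h p f hfN.2⟩)

/-- `H^p_{⟨x⟩}(M)`, realized as the direct limit of the Koszul cohomology modules
`H^p(x^{u+1}; M)` along the transition maps (cf. 2.1(iv) in the paper). -/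
abbrev KLoc {n : ℕ} (x : Fin n → R) (M : Type) [AddCommGroup M] [Module R M] (p : ℕ) :=
  Module.DirectLimit (fun u : ℕ => Hk (fun j => x j ^ (u + 1)) M p)
    (fun u v h => ktH x M p u v h)

/-- Transport of Koszul cohomology along an equality of defining sequences. -/
def castHk {n : ℕ} (M : Type) [AddCommGroup M] [Module R M] (p : ℕ) {y z : Fin n → R}
    (h : y = z) : Hk y M p →ₗ[R] Hk z M p :=
  Eq.rec (motive := fun w _ => Hk y M p →ₗ[R] Hk w M p) LinearMap.id h

/-- The canonical map `λ^p_M : H^p(x; M) → H^p_{⟨x⟩}(M)`, i.e. the structure map of the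
direct limit at exponent `1`. -/
def klambda {n : ℕ} (x : Fin n → R) (M : Type) [AddCommGroup M] [Module R M] (p : ℕ) :
    Hk x M p →ₗ[R] KLoc x M p :=
  (Module.DirectLimit.of R ℕ (fun u : ℕ => Hk (fun j => x j ^ (u + 1)) M p)
      (fun u v h => ktH x M p u v h) 0).comp
    (castHk M p (funext fun j => by rw [zero_add, pow_one] :
      x = fun j => x j ^ (0 + 1)))

/-- Surjectivity of the canonical map `λ^p_M : H^p(x; M) → H^p_{⟨x⟩}(M)`. -/
def LambdaSurj {n : ℕ} (x : Fin n → R) (M : Type) [AddCommGroup M] [Module R M] (p : ℕ) :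
    Prop :=
  Function.Surjective (klambda x M p)

/-! ### Koszul complex: auxiliary facts -/

section Aux

variable {M : Type} [AddCommGroup M] [Module R M]

/-- The sign `(-1)^{#{a ∈ t : a < j}}`. -/
def ksgn (R : Type) [CommRing R] {n : ℕ} (t : Finset (Fin n)) (j : Fin n) : R :=
  (-1 : R) ^ (t.filter (fun a => a < j)).card

theorem ksgn_mul_self {n : ℕ} (t : Finset (Fin n)) (j : Fin n) :
    ksgn R t j * ksgn R t j = 1 := by
  unfold ksgn
  rw [← pow_add, ← two_mul]
  simp

theorem ksgn_erase_self {n : ℕ} (t : Finset (Fin n)) (j : Fin n) :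
    ksgn R (t.erase j) j = ksgn R t j := by
  unfold ksgn
  congr 2
  ext a
  simp only [Finset.mem_filter, Finset.mem_erase]
  constructor
  · rintro ⟨⟨_, h⟩, h2⟩
    exact ⟨h, h2⟩
  · rintro ⟨h, h2⟩
    exact ⟨⟨h2.ne, h⟩, h2⟩

theorem ksgn_erase_of_gt {n : ℕ} (t : Finset (Fin n)) {i j : Fin n} (h : j < i) :
    ksgn R (t.erase i) j = ksgn R t j := by
  unfold ksgn
  congr 2
  ext a
  simp only [Finset.mem_filter, Finset.mem_erase]
  constructor
  · rintro ⟨⟨_, h⟩, h2⟩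
    exact ⟨h, h2⟩
  · rintro ⟨h', h2⟩
    exact ⟨⟨(h2.trans h).ne, h'⟩, h2⟩

theorem ksgn_erase_of_lt {n : ℕ} (t : Finset (Fin n)) {i j : Fin n} (hi : i ∈ t) (h : i < j) :
    ksgn R (t.erase i) j = - ksgn R t j := by
  unfold ksgn
  have h1 : (t.erase i).filter (fun a => a < j) = (t.filter (fun a => a < j)).erase i := by
    ext a
    simp only [Finset.mem_filter, Finset.mem_erase]
    tauto
  have h2 : i ∈ t.filter (fun a => a < j) := by simp [hi, h]
  rw [h1, ← Finset.card_erase_add_one h2, pow_succ]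
  simp

/-- Extension by zero of a cochain to all finite subsets. -/
def kext {n p : ℕ} (f : KM M n p) (s : Finset (Fin n)) : M :=
  if h : s.card = p then f ⟨s, h⟩ else 0

theorem kext_apply {n p : ℕ} (f : KM M n p) (s : {s : Finset (Fin n) // s.card = p}) :
    kext f s.1 = f s := by
  simp [kext, s.2]

theorem kd_apply {n : ℕ} (x : Fin n → R) (p : ℕ) (f : KM M n p)
    (t : {s : Finset (Fin n) // s.card = p + 1}) :
    kd x p f t = ∑ j ∈ t.1, (ksgn R t.1 j * x j) • kext f (t.1.erase j) := by
  rw [← Finset.sum_attach]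
  simp only [kd, LinearMap.coe_mk, AddHom.coe_mk]
  refine Finset.sum_congr rfl fun j _ => ?_
  have : (t.1.erase j.1).card = p := by
    rw [Finset.card_erase_of_mem j.2, t.2]; omega
  simp [kext, this, ksgn]

theorem kext_kd {n : ℕ} (x : Fin n → R) (p : ℕ) (f : KM M n p)
    (t : Finset (Fin n)) (ht : t.card = p + 1) :
    kext (kd x p f) t = ∑ j ∈ t, (ksgn R t j * x j) • kext f (t.erase j) := by
  rw [← kd_apply x p f ⟨t, ht⟩]
  exact kext_apply _ ⟨t, ht⟩

theorem kd_kd {n : ℕ} (x : Fin n → R) (p : ℕ) (f : KM M n p) :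
    kd x (p + 1) (kd x p f) = 0 := by
  funext t
  rw [kd_apply]
  have h1 : ∀ i ∈ t.1, (ksgn R t.1 i * x i) • kext (kd x p f) (t.1.erase i)
      = ∑ j ∈ t.1.erase i, (ksgn R t.1 i * x i * (ksgn R (t.1.erase i) j * x j)) •
          kext f ((t.1.erase i).erase j) := by
    intro i hi
    rw [kext_kd _ _ _ _ (by rw [Finset.card_erase_of_mem hi, t.2]; omega), Finset.smul_sum]
    simp only [smul_smul]
  rw [Finset.sum_congr rfl h1, Finset.sum_sigma']
  refine Finset.sum_involution (fun a _ => ⟨a.2, a.1⟩) ?_ ?_ ?_ ?_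
  · rintro ⟨i, j⟩ h
    simp only [Finset.mem_sigma, Finset.mem_erase] at h
    obtain ⟨hi, hne, hj⟩ := h
    dsimp only
    rw [Finset.erase_right_comm (a := j) (b := i), ← add_smul]
    rcases lt_or_gt_of_ne hne with h | h
    · rw [ksgn_erase_of_gt _ h, ksgn_erase_of_lt _ hj h]
      convert zero_smul R _ using 2
      ring
    · rw [ksgn_erase_of_gt _ h, ksgn_erase_of_lt _ hi h]
      convert zero_smul R _ using 2
      ring
  · rintro ⟨i, j⟩ h _ heq
    simp only [Finset.mem_sigma, Finset.mem_erase] at h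
    exact h.2.1 (congrArg Sigma.fst heq)
  · rintro ⟨i, j⟩ h
    simp only [Finset.mem_sigma, Finset.mem_erase] at h ⊢
    exact ⟨h.2.2, fun e => h.2.1 e.symm, h.1⟩
  · rintro ⟨i, j⟩ h
    rfl

/-- The contracting homotopy in the direction `k`. -/
def khom {n : ℕ} (k : Fin n) (p : ℕ) (g : KM M n (p + 1)) (R : Type) [CommRing R] [Module R M] :
    KM M n p :=
  fun s => if k ∈ s.1 then 0 else ksgn R s.1 k • kext g (insert k s.1)

theorem kd_khom {n : ℕ} (x : Fin n → R) (k : Fin n) (p : ℕ) (g : KM M n (p + 1))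
    (hg : kd x (p + 1) g = 0) : kd x p (khom k p g R) = x k • g := by
  have hext : ∀ s : Finset (Fin n), s.card = p → kext (khom k p g R) s =
      if k ∈ s then 0 else ksgn R s k • kext g (insert k s) := by
    intro s hs
    simp [kext, khom, hs]
  funext t
  rw [kd_apply]
  have hcard : ∀ j ∈ t.1, (t.1.erase j).card = p := by
    intro j hj
    rw [Finset.card_erase_of_mem hj, t.2]; omega
  rw [Finset.sum_congr rfl fun j hj => by rw [hext _ (hcard j hj)]]
  by_cases hk : k ∈ t.1
  · rw [Finset.sum_eq_single_of_mem k hk]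
    · rw [if_neg (by simp), Finset.insert_erase hk, ksgn_erase_self, kext_apply, smul_smul,
        Pi.smul_apply]
      congr 1
      rw [mul_right_comm, ksgn_mul_self, one_mul]
    · intro j hj hjk
      rw [if_pos (by simp [hk, hjk.symm]), smul_zero]
  · have h0 := kext_kd x (p + 1) g (insert k t.1) (by rw [Finset.card_insert_of_notMem hk, t.2])
    rw [hg, Finset.sum_insert hk, Finset.erase_insert hk, kext_apply] at h0
    have hz : kext (0 : KM M n (p + 1 + 1)) (insert k t.1) = 0 := by
      simp [kext]
    rw [hz, ← ksgn_erase_self, Finset.erase_insert hk] at h0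
    have h1 := congrArg (fun m => ksgn R t.1 k • m) h0
    simp only [smul_zero, smul_add, smul_smul, ← mul_assoc, ksgn_mul_self, one_mul,
      Finset.smul_sum] at h1
    rw [Pi.smul_apply, eq_neg_of_add_eq_zero_left h1.symm, ← Finset.sum_neg_distrib]
    refine Finset.sum_congr rfl fun j hj => ?_
    have hjk : j ≠ k := fun h => hk (h ▸ hj)
    rw [if_neg (by simp [hk]), smul_smul, ← neg_smul, Finset.erase_insert_of_ne hjk.symm]
    congr 1
    have hke : (insert k t.1).erase k = t.1 := Finset.erase_insert hk
    rcases lt_or_gt_of_ne hjk with h | h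
    · rw [ksgn_erase_of_lt _ hj h]
      have : ksgn R (insert k t.1) j = ksgn R t.1 j := by
        conv_rhs => rw [← hke]
        rw [ksgn_erase_of_gt _ h]
      rw [this]
      ring
    · rw [ksgn_erase_of_gt _ h]
      have : ksgn R t.1 j = - ksgn R (insert k t.1) j := by
        conv_lhs => rw [← hke]
        rw [ksgn_erase_of_lt _ (by simp) h]
      rw [this]
      ring

theorem smul_mem_kB {n : ℕ} (x : Fin n → R) (p : ℕ) (g : KM M n (p + 1))
    (hg : g ∈ kZ x M (p + 1)) (z : R) (hz : z ∈ Ideal.span (Set.range x)) :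
    ∃ g' : KM M n p, kd x p g' = z • g := by
  change z • g ∈ LinearMap.range (kd (M := M) x p)
  induction hz using Submodule.span_induction with
  | mem y hy =>
    obtain ⟨k, rfl⟩ := hy
    exact ⟨_, kd_khom x k p g hg⟩
  | zero => rw [zero_smul]; exact Submodule.zero_mem _
  | add a b _ _ ha hb => rw [add_smul]; exact Submodule.add_mem _ ha hb
  | smul a b _ hb => rw [smul_assoc]; exact Submodule.smul_mem _ _ hb

theorem kt_kt {n : ℕ} (x : Fin n → R) (a b p : ℕ) (f : KM M n p) :
    kt x a p (kt x b p f) = kt x (b + a) p f := by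
  funext s
  simp only [kt, LinearMap.coe_mk, AddHom.coe_mk, smul_smul]
  congr 1
  ring

theorem kt_zero {n : ℕ} (x : Fin n → R) (p : ℕ) (f : KM M n p) :
    kt x 0 p f = f := by
  funext s
  simp [kt]

theorem kd_kt {n : ℕ} (x : Fin n → R) (u v e p : ℕ) (h : v = u + e) (f : KM M n p) :
    kd (fun j => x j ^ v) p (kt x e p f) = kt x e (p + 1) (kd (fun j => x j ^ u) p f) := by
  subst h
  exact (congrArg (fun φ => φ f) (kt_kd (M := M) x u e p)).symm

instance ktH_directed {n : ℕ} (x : Fin n → R) (p : ℕ) :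
    DirectedSystem (fun u : ℕ => Hk (fun j => x j ^ (u + 1)) M p)
      (fun u v h => ktH x M p u v h) where
  map_self := by
    intro i y
    obtain ⟨⟨f, hf⟩, rfl⟩ := Submodule.Quotient.mk_surjective _ y
    simp only [ktH, Submodule.mapQ_apply]
    congr 1
    ext1
    simp [kt_zero]
  map_map := by
    intro k j i hij hjk y
    obtain ⟨⟨f, hf⟩, rfl⟩ := Submodule.Quotient.mk_surjective _ y
    simp only [ktH, Submodule.mapQ_apply]
    congr 1
    ext1
    simp only [LinearMap.coe_restrict_apply, kt_kt]
    congr 2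
    omega

theorem castHk_mk {n : ℕ} (p : ℕ) {y z : Fin n → R} (h : y = z) (g : KM M n p)
    (hg : g ∈ kZ y M p) :
    castHk M p h (Submodule.Quotient.mk ⟨g, hg⟩) = Submodule.Quotient.mk ⟨g, h ▸ hg⟩ := by
  subst h
  rfl

theorem lambdaSurj_iff {n : ℕ} (b : Fin n → R) (p : ℕ) :
    LambdaSurj b M p ↔ ∀ u : ℕ, ∀ f ∈ kZ (fun j => b j ^ (u + 1)) M p,
      ∃ g ∈ kZ b M p, ∃ v, u ≤ v ∧
        kt b v p g - kt b (v - u) p f ∈ kB (fun j => b j ^ (v + 1)) M p := by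
  constructor
  · intro h u f hf
    obtain ⟨y, hy⟩ := h (Module.DirectLimit.of R ℕ (fun u : ℕ => Hk (fun j => b j ^ (u + 1)) M p)
      (fun u v h => ktH b M p u v h) u (Submodule.Quotient.mk ⟨f, hf⟩))
    obtain ⟨⟨g, hg⟩, rfl⟩ := Submodule.Quotient.mk_surjective _ y
    refine ⟨g, hg, ?_⟩
    simp only [klambda, LinearMap.comp_apply, castHk_mk] at hy
    rw [← Module.DirectLimit.of_f (f := fun u v h => ktH b M p u v h)
      (hij := Nat.zero_le u)] at hy
    obtain ⟨v, huv, hv⟩ := Module.DirectLimit.exists_eq_of_of_eq hy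
    refine ⟨v, huv, ?_⟩
    simp only [ktH, Submodule.mapQ_apply] at hv
    rw [Submodule.Quotient.eq] at hv
    have h2 := hv.1
    simpa [kt_kt, Nat.add_sub_cancel' huv] using h2
  · intro h y
    obtain ⟨u, y, rfl⟩ := Module.DirectLimit.exists_of y
    obtain ⟨⟨f, hf⟩, rfl⟩ := Submodule.Quotient.mk_surjective _ y
    obtain ⟨g, hg, v, huv, hB⟩ := h u f hf
    refine ⟨Submodule.Quotient.mk ⟨g, hg⟩, ?_⟩
    simp only [klambda, LinearMap.comp_apply, castHk_mk]
    rw [← Module.DirectLimit.of_f (f := fun u v h => ktH b M p u v h)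
      (hij := Nat.zero_le v), ← Module.DirectLimit.of_f (f := fun u v h => ktH b M p u v h)
      (hij := huv)]
    congr 1
    simp only [ktH, Submodule.mapQ_apply]
    rw [Submodule.Quotient.eq]
    refine ⟨by simpa using hB, ?_⟩
    rw [Submodule.subtype_apply]
    exact SetLike.coe_mem _

end Aux

/-! ### Passing to a quotient by a filter regular element -/

section Quot

variable {M : Type} [AddCommGroup M] [Module R M] {Q : Type} [AddCommGroup Q] [Module R Q]

/-- The map of Koszul cochains induced by a linear map. -/
def kmap (π : M →ₗ[R] Q) {n p : ℕ} (f : KM M n p) : KM Q n p := fun s => π (f s)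

theorem kmap_kd (π : M →ₗ[R] Q) {n : ℕ} (x : Fin n → R) (p : ℕ) (f : KM M n p) :
    kmap π (kd x p f) = kd x p (kmap π f) := by
  funext t
  simp [kmap, kd]

theorem kmap_kt (π : M →ₗ[R] Q) {n : ℕ} (x : Fin n → R) (e p : ℕ) (f : KM M n p) :
    kmap π (kt x e p f) = kt x e p (kmap π f) := by
  funext t
  simp [kmap, kt]

theorem kmap_sub (π : M →ₗ[R] Q) {n p : ℕ} (f g : KM M n p) :
    kmap π (f - g) = kmap π f - kmap π g := by
  funext t
  simp [kmap]

theorem kmap_mem_kB (π : M →ₗ[R] Q) {n : ℕ} (x : Fin n → R) (p : ℕ) (f : KM M n p)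
    (hf : f ∈ kB x M p) : kmap π f ∈ kB x Q p := by
  cases p with
  | zero =>
    simp only [kB, Submodule.mem_bot] at hf ⊢
    subst hf
    funext t
    simp [kmap]
  | succ q =>
    obtain ⟨g, rfl⟩ := hf
    exact ⟨kmap π g, (kmap_kd π x q g).symm⟩

theorem lambdaSurj_quot (π : M →ₗ[R] Q) (hπ : Function.Surjective π) (z : R)
    (hker : ∀ m, π m = 0 ↔ ∃ m', m = z • m') {n : ℕ} (b : Fin n → R)
    (hz : z ∈ Ideal.span (Set.range b)) (hN : ∀ m : M, z • m = 0 → ∀ k, b k • m = 0)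
    (j : ℕ) (h0 : LambdaSurj b M j) (h1 : LambdaSurj b M (j + 1)) : LambdaSurj b Q j := by
  rw [lambdaSurj_iff] at h0 h1 ⊢
  intro u f' hf'
  have hsurj : ∃ f : KM M n j, kmap π f = f' := by
    choose f hf using fun s => hπ (f' s)
    exact ⟨f, funext hf⟩
  obtain ⟨f, rfl⟩ := hsurj
  have hdiv : ∀ {q : ℕ} (F : KM M n q), kmap π F = 0 → ∃ H : KM M n q, F = z • H := by
    intro q F hF
    choose H hH using fun s => (hker (F s)).1 (congrFun hF s)
    exact ⟨H, funext hH⟩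
  have hzero : ∀ {q : ℕ} (F : KM M n q), kmap π (z • F) = 0 := by
    intro q F
    funext s
    exact (hker _).2 ⟨F s, rfl⟩
  obtain ⟨h, hh⟩ := hdiv (kd (fun j => b j ^ (u + 1)) j f) (by rw [kmap_kd]; exact hf')
  have hzdh : z • kd (fun j => b j ^ (u + 1)) (j + 1) h = 0 := by
    rw [← map_smul, ← hh, kd_kd]
  have hcoc : kt b 1 (j + 1) h ∈ kZ (fun j => b j ^ (u + 1 + 1)) M (j + 1) := by
    change kd _ _ _ = 0
    rw [kd_kt b (u + 1) (u + 1 + 1) 1 (j + 1) rfl]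
    funext s
    have hs : s.1.Nonempty := Finset.card_pos.1 (by rw [s.2]; omega)
    obtain ⟨k, hk⟩ := hs
    have := hN _ (congrFun hzdh s) k
    simp only [kt, LinearMap.coe_mk, AddHom.coe_mk, pow_one]
    rw [← Finset.prod_erase_mul _ _ hk, mul_smul, this, smul_zero]
    rfl
  obtain ⟨g, hg, v, huv, w, hw⟩ := h1 (u + 1) _ hcoc
  rw [kt_kt, show 1 + (v - (u + 1)) = v - u by omega] at hw
  obtain ⟨g', hg'⟩ := smul_mem_kB b j g hg z hz
  have hcoc2 : kt b v j g' - kt b (v - u) j f - z • w ∈ kZ (fun j => b j ^ (v + 1)) M j := by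
    change kd _ _ _ = 0
    have e1 : kd (fun j => b j ^ (v + 1)) j (kt b v j g') = z • kt b v (j + 1) g := by
      rw [kd_kt b 1 (v + 1) v j (by omega)]
      simp only [pow_one]
      rw [hg', map_smul]
    rw [map_sub, map_sub, map_smul, hw, e1, kd_kt b (u + 1) (v + 1) (v - u) j (by omega), hh,
      map_smul]
    rw [smul_sub]
    abel
  obtain ⟨g2, hg2, v2, hv2, hB⟩ := h0 v _ hcoc2
  refine ⟨kmap π (g' - g2), ?_, v2, by omega, ?_⟩
  · change kd _ _ _ = 0
    have hg2' : kd b j g2 = 0 := hg2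
    rw [← kmap_kd, map_sub, hg', hg2', sub_zero, hzero]
  · have h3 := Submodule.neg_mem _ (kmap_mem_kB π _ _ _ hB)
    convert h3 using 1
    rw [← kmap_kt, ← kmap_kt]
    simp only [map_sub, map_smul, kmap_sub, kt_kt, hzero]
    rw [show v + (v2 - v) = v2 by omega, show v - u + (v2 - v) = v2 - u by omega]
    abel

end Quot

/-! ### Prime avoidance for cosets and filter regular elements -/

theorem coset_avoid (s : Set (Ideal R)) (hs : s.Finite) (hp : ∀ p ∈ s, p.IsPrime)
    (a : R) (J : Ideal R) (h : ∀ p ∈ s, a ∈ p → ¬ J ≤ p) :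
    ∃ j ∈ J, ∀ p ∈ s, a + j ∉ p := by
  classical
  set T : Set (Ideal R) := {p | Maximal (· ∈ s) p ∧ a ∈ p} with hT
  set U : Set (Ideal R) := {p | Maximal (· ∈ s) p ∧ a ∉ p} with hU
  have hTs : T ⊆ s := fun p hp => hp.1.prop
  have hUs : U ⊆ s := fun p hp => hp.1.prop
  have hUf : U.Finite := hs.subset hUs
  have key : ¬ (((J ⊓ hUf.toFinset.inf id : Ideal R) : Set R) ⊆ ⋃ p ∈ T, (id p : Ideal R)) := by
    rw [Ideal.subset_union_prime_finite (hs.subset hTs) (f := id) ⊥ ⊥ fun p hpT _ _ => hp p (hTs hpT)]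
    rintro ⟨p, hpT, hle⟩
    have hpp := hp p (hTs hpT)
    rcases hpp.inf_le.1 hle with h1 | h1
    · exact h p (hTs hpT) hpT.2 h1
    · obtain ⟨q, hq, hqp⟩ := hpp.inf_le'.1 h1
      have hqU : q ∈ U := hUf.mem_toFinset.1 hq
      have : q = p := le_antisymm hqp (hqU.1.le_of_ge (hTs hpT) hqp)
      exact hqU.2 (this ▸ hpT.2)
  obtain ⟨j, hj, hjT⟩ := Set.not_subset.1 key
  refine ⟨j, hj.1, fun p hps hmem => ?_⟩
  obtain ⟨m, hpm, hm⟩ := hs.exists_le_maximal hps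
  have hmem' := hpm hmem
  by_cases ham : a ∈ m
  · exact hjT (Set.mem_biUnion (show m ∈ T from ⟨hm, ham⟩) ((Submodule.add_mem_iff_right _ ham).1 hmem'))
  · have hjm : j ∈ m := (Finset.inf_le (f := id) (hUf.mem_toFinset.2 (show m ∈ U from ⟨hm, ham⟩))) hj.2
    exact ham ((Submodule.add_mem_iff_left _ hjm).1 hmem')

/-- The submodule `0 :_M I`. -/
def socI (I : Ideal R) (M : Type) [AddCommGroup M] [Module R M] : Submodule R M where
  carrier := {m | ∀ a ∈ I, a • m = 0}
  add_mem' := by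
    intro x y hx hy a ha
    rw [smul_add, hx a ha, hy a ha, add_zero]
  zero_mem' := by simp
  smul_mem' := by
    intro r x hx a ha
    rw [smul_comm, hx a ha, smul_zero]

theorem mem_socI {I : Ideal R} {M : Type} [AddCommGroup M] [Module R M] {m : M} :
    m ∈ socI I M ↔ ∀ a ∈ I, a • m = 0 := Iff.rfl

theorem exists_filter_regular [IsNoetherianRing R] (I : Ideal R)
    (M : Type) [AddCommGroup M] [Module R M] [Module.Finite R M]
    (hsoc : ∀ m : M, (∀ a ∈ I, a • m ∈ socI I M) → m ∈ socI I M)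
    (w : R) (J : Ideal R)
    (hrad : I ≤ (Ideal.span {w} ⊔ J ⊔ Module.annihilator R M).radical) :
    ∃ j ∈ J, ∀ m : M, (w + j) • m ∈ socI I M → m ∈ socI I M := by
  set Q := M ⧸ socI I M
  obtain ⟨j, hj, hav⟩ := coset_avoid (associatedPrimes R Q) (associatedPrimes.finite R Q)
    (fun p hp => hp.1) w J (by
      intro p hp hw hJ
      have hp' : IsAssociatedPrime p Q := hp
      rw [isAssociatedPrime_iff] at hp'
      obtain ⟨hprime, x, hx⟩ := hp'
      obtain ⟨m, rfl⟩ := Submodule.Quotient.mk_surjective _ x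
      have hmem : ∀ r, r ∈ p ↔ r • m ∈ socI I M := by
        intro r
        rw [hx, Submodule.mem_colon_singleton, Submodule.mem_bot, ← Submodule.Quotient.mk_smul,
          Submodule.Quotient.mk_eq_zero]
      have hann : Module.annihilator R M ≤ p := by
        intro r hr
        rw [hmem, Module.mem_annihilator.1 hr m]
        exact Submodule.zero_mem _
      have hIp : I ≤ p := hrad.trans (hprime.radical_le_iff.2
        (sup_le (sup_le (by rwa [Ideal.span_singleton_le_iff_mem]) hJ) hann))
      have hm := hsoc m fun a ha => (hmem a).1 (hIp ha)
      exact hprime.one_notMem ((hmem 1).2 (by rwa [one_smul])))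
  refine ⟨j, hj, fun m hm => ?_⟩
  have hreg : IsSMulRegular Q (w + j) := by
    by_contra hcon
    have : (w + j) ∈ ({ r : R | IsSMulRegular Q r }ᶜ : Set R) := hcon
    rw [← biUnion_associatedPrimes_eq_compl_regular] at this
    obtain ⟨p, hp, hpm⟩ := Set.mem_iUnion₂.1 this
    exact hav p hp hpm
  rw [← Submodule.Quotient.mk_eq_zero] at hm ⊢
  rw [Submodule.Quotient.mk_smul] at hm
  exact hreg.right_eq_zero_of_smul hm

/-! ### The main induction -/

/-- Surjectivity of the canonical maps in all degrees `< c` for all generating sets of `I`. -/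
def AllSurj (I : Ideal R) (c : ℕ) (M : Type) [AddCommGroup M] [Module R M] : Prop :=
  ∀ (t : ℕ) (b : Fin t → R), Ideal.span (Set.range b) = I → ∀ i : ℕ, i < c → LambdaSurj b M i

theorem mem_socI_of_torsion [IsNoetherianRing R] (I : Ideal R) (c : ℕ) (hc : 0 < c)
    (M : Type) [AddCommGroup M] [Module R M] (hS : AllSurj I c M) (m : M)
    (hm : ∀ a ∈ I, ∃ n : ℕ, a ^ n • m = 0) : m ∈ socI I M := by
  obtain ⟨t, b, hb⟩ := Submodule.fg_iff_exists_fin_generating_family.1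
    (IsNoetherian.noetherian I)
  have hb' : Ideal.span (Set.range b) = I := hb
  have hbI : ∀ k, b k ∈ I := fun k => hb' ▸ Ideal.subset_span ⟨k, rfl⟩
  choose N hN using fun k => hm (b k) (hbI k)
  have hpow : ∀ k, b k ^ ((∑ i, N i) + 1) • m = 0 := by
    intro k
    have hle : N k ≤ ∑ i, N i := Finset.single_le_sum (fun _ _ => Nat.zero_le _) (Finset.mem_univ k)
    rw [show (∑ i, N i) + 1 = ((∑ i, N i) + 1 - N k) + N k by omega, pow_add, mul_smul, hN,
      smul_zero]
  have hS0 := (lambdaSurj_iff b 0).1 (hS t b hb' 0 hc)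
  have hev : ∀ (x : Fin t → R) (f : KM M t 0) (k : Fin t),
      kd x 0 f ⟨{k}, rfl⟩ = x k • f ⟨∅, rfl⟩ := by
    intro x f k
    rw [kd_apply]
    simp [ksgn, kext]
    simp [Finset.filter_singleton]
  obtain ⟨g, hg, v, huv, hB⟩ := hS0 (∑ i, N i) (fun _ => m) (by
    change kd _ _ _ = 0
    funext s
    obtain ⟨s, hs⟩ := s
    obtain ⟨k, rfl⟩ := Finset.card_eq_one.1 hs
    rw [hev]
    exact hpow k)
  have hB' : kt b v 0 g - kt b (v - ∑ i, N i) 0 (fun _ => m) = 0 := hB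
  have h1 : g ⟨∅, rfl⟩ = m := by
    have := congrFun hB' ⟨∅, rfl⟩
    simpa [kt, sub_eq_zero] using this
  have hg' : kd b 0 g = 0 := hg
  have h2 : ∀ k, b k • m = 0 := by
    intro k
    rw [← h1, ← hev, hg']
    rfl
  intro a ha
  rw [← hb'] at ha
  have hle : Ideal.span (Set.range b) ≤ LinearMap.ker (LinearMap.toSpanSingleton R M m) := by
    rw [Ideal.span_le]
    rintro _ ⟨k, rfl⟩
    exact h2 k
  exact hle ha

theorem mem_quot_iff (M : Type) [AddCommGroup M] [Module R M] (z : R) (m : M) :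
    (Ideal.span {z} • (⊤ : Submodule R M)).mkQ m = 0 ↔ ∃ m', m = z • m' := by
  rw [Submodule.mkQ_apply, Submodule.Quotient.mk_eq_zero, Submodule.ideal_span_singleton_smul,
    Submodule.mem_smul_pointwise_iff_exists]
  simp [eq_comm]

theorem AllSurj.quot {I : Ideal R} {c : ℕ} {M : Type} [AddCommGroup M] [Module R M]
    (hS : AllSurj I (c + 1) M) (z : R) (hz : z ∈ I) (hN : ∀ m : M, z • m = 0 → m ∈ socI I M) :
    AllSurj I c (M ⧸ (Ideal.span {z} • (⊤ : Submodule R M))) := by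
  intro t b hb i hi
  refine lambdaSurj_quot _ (Submodule.mkQ_surjective _) z (mem_quot_iff M z) b (hb ▸ hz) ?_ i
    (hS t b hb i (by omega)) (hS t b hb (i + 1) (by omega))
  intro m hm k
  exact hN m hm _ (hb ▸ Ideal.subset_span ⟨k, rfl⟩)

theorem mem_ann_quot (M : Type) [AddCommGroup M] [Module R M] (z : R) :
    z ∈ Module.annihilator R (M ⧸ (Ideal.span {z} • (⊤ : Submodule R M))) := by
  rw [Module.mem_annihilator]
  intro q
  obtain ⟨m, rfl⟩ := Submodule.mkQ_surjective _ q
  rw [← map_smul, mem_quot_iff]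
  exact ⟨m, rfl⟩

theorem ann_le_quot (M : Type) [AddCommGroup M] [Module R M] (N : Submodule R M) :
    Module.annihilator R M ≤ Module.annihilator R (M ⧸ N) :=
  LinearMap.annihilator_le_of_surjective N.mkQ N.mkQ_surjective

theorem first_step [IsNoetherianRing R] (I : Ideal R) (hjac : I ≤ (⊥ : Ideal R).jacobson) :
    ∀ (c : ℕ) (M : Type) [AddCommGroup M] [Module R M] [Module.Finite R M],
      AllSurj I (c + 1) M → ∀ y ∈ I, ∀ w : Fin c → R, (∀ k, w k ∈ I) →
      I ≤ (Ideal.span {y} ⊔ Ideal.span (Set.range w) ⊔ Module.annihilator R M).radical →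
      ∀ m : M, y • m = 0 → m ∈ socI I M := by
  intro c
  induction c with
  | zero =>
    intro M _ _ _ hS y hy w hw hrad m hm
    refine mem_socI_of_torsion I 1 (by omega) M hS m fun a ha => ?_
    obtain ⟨n, hn⟩ := hrad ha
    refine ⟨n, ?_⟩
    rw [Set.range_eq_empty, Ideal.span_empty, sup_bot_eq] at hn
    obtain ⟨p, hp, q, hq, hpq⟩ := Submodule.mem_sup.1 hn
    obtain ⟨r, rfl⟩ := Ideal.mem_span_singleton'.1 hp
    rw [← hpq, add_smul, mul_smul, hm, smul_zero, Module.mem_annihilator.1 hq, zero_add]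
  | succ c ih =>
    intro M _ _ _ hS y hy w hw hrad m hm
    have hsoc : ∀ m : M, (∀ a ∈ I, a • m ∈ socI I M) → m ∈ socI I M := by
      intro m hm
      refine mem_socI_of_torsion I _ (by omega) M hS m fun a ha => ⟨2, ?_⟩
      rw [pow_two, mul_smul]
      exact hm a ha a ha
    set J := Ideal.span {y} ⊔ Ideal.span (Set.range (fun k : Fin c => w k.succ)) with hJ
    have hJI : J ≤ I := by
      refine sup_le (by rwa [Ideal.span_singleton_le_iff_mem]) (Ideal.span_le.2 ?_)
      rintro _ ⟨k, rfl⟩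
      exact hw _
    have hXle : Ideal.span {y} ⊔ Ideal.span (Set.range w) ≤ Ideal.span {w 0} ⊔ J := by
      refine sup_le (le_sup_left.trans le_sup_right) (Ideal.span_le.2 ?_)
      rintro _ ⟨k, rfl⟩
      refine Fin.cases ?_ (fun k => ?_) k
      · exact (le_sup_left : _ ≤ Ideal.span {w 0} ⊔ J) (Ideal.mem_span_singleton_self _)
      · exact (le_sup_right.trans le_sup_right : _ ≤ Ideal.span {w 0} ⊔ J)
          (Ideal.subset_span ⟨k, rfl⟩)
    have hrad1 : I ≤ (Ideal.span {w 0} ⊔ J ⊔ Module.annihilator R M).radical :=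
      hrad.trans (Ideal.radical_mono (sup_le_sup_right hXle _))
    obtain ⟨j, hj, hreg⟩ := exists_filter_regular I M hsoc (w 0) J hrad1
    set z := w 0 + j with hz
    have hzI : z ∈ I := add_mem (hw 0) (hJI hj)
    have hreg2 : ∀ m : M, z ^ 2 • m ∈ socI I M → m ∈ socI I M := by
      intro m hm
      rw [pow_two, mul_smul] at hm
      exact hreg _ (hreg _ hm)
    have hSQ := hS.quot (z ^ 2) (Ideal.pow_mem_of_mem I hzI 2 (by omega))
      (fun m hm => hreg2 m (by rw [hm]; exact Submodule.zero_mem _))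
    have hradQ : I ≤ (Ideal.span {y ^ 2} ⊔ Ideal.span (Set.range (fun k : Fin c => w k.succ)) ⊔
        Module.annihilator R (M ⧸ (Ideal.span {z ^ 2} • (⊤ : Submodule R M)))).radical := by
      set K := Ideal.span {y ^ 2} ⊔ Ideal.span (Set.range (fun k : Fin c => w k.succ)) ⊔
        Module.annihilator R (M ⧸ (Ideal.span {z ^ 2} • (⊤ : Submodule R M))) with hK
      refine hrad1.trans (Ideal.radical_le_radical_iff.2 ?_)
      have h1 : J ≤ K.radical := by
        refine sup_le ?_ ((le_sup_right.trans le_sup_left).trans Ideal.le_radical)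
        rw [Ideal.span_singleton_le_iff_mem]
        exact ⟨2, (le_sup_left.trans le_sup_left : _ ≤ K) (Ideal.mem_span_singleton_self _)⟩
      have h2 : z ∈ K.radical := ⟨2, (le_sup_right : _ ≤ K) (mem_ann_quot M _)⟩
      refine sup_le (sup_le ?_ h1) (((ann_le_quot M _).trans le_sup_right).trans Ideal.le_radical)
      rw [Ideal.span_singleton_le_iff_mem]
      have : w 0 = z - j := by rw [hz]; ring
      rw [this]
      exact sub_mem h2 (h1 hj)
    have hQ := ih _ hSQ (y ^ 2) (Ideal.pow_mem_of_mem I hy 2 (by omega)) _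
      (fun k => hw k.succ) hradQ
    set L : Submodule R M := (socI I M).comap (LinearMap.lsmul R M y) with hL
    have hmemL : ∀ l : M, l ∈ L ↔ y • l ∈ socI I M := fun l => Iff.rfl
    have hLle : L ≤ socI I M ⊔ I • L := by
      intro l hl
      rw [hmemL] at hl
      have h1 := hQ ((Ideal.span {z ^ 2} • (⊤ : Submodule R M)).mkQ l) (by
        rw [← map_smul, pow_two y, mul_smul, hl y hy, map_zero]) z hzI
      rw [← map_smul, mem_quot_iff] at h1
      obtain ⟨m', hm'⟩ := h1
      have hm'L : m' ∈ L := by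
        rw [hmemL]
        refine hreg2 _ ?_
        rw [smul_comm, ← hm', smul_comm, hl z hzI]
        exact Submodule.zero_mem _
      have h2 : l - z • m' ∈ socI I M := by
        refine hreg _ ?_
        rw [smul_sub, hm', pow_two, mul_smul, sub_self]
        exact Submodule.zero_mem _
      have : l = (l - z • m') + z • m' := by abel
      rw [this]
      exact Submodule.add_mem_sup h2 (Submodule.smul_mem_smul hzI hm'L)
    refine Submodule.le_of_le_smul_of_le_jacobson_bot (IsNoetherian.noetherian L) hjac hLle ?_
    rw [hmemL, hm]
    exact Submodule.zero_mem _

theorem pSpan_succ (M : Type) [AddCommGroup M] [Module R M] {c : ℕ} (x : Fin (c + 1) → R)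
    (i : Fin c) (m : M) :
    m ∈ pSpan M x i.succ ↔ (Ideal.span {x 0} • (⊤ : Submodule R M)).mkQ m ∈
      pSpan (M ⧸ (Ideal.span {x 0} • (⊤ : Submodule R M))) (fun k => x k.succ) i := by
  have h1 : x '' {j | j < i.succ} = {x 0} ∪ (fun k : Fin c => x k.succ) '' {j | j < i} := by
    ext r
    simp only [Set.mem_image, Set.mem_ofPred_eq, Set.mem_union, Set.mem_singleton_iff]
    constructor
    · rintro ⟨j, hj, rfl⟩
      induction j using Fin.cases with
      | zero => exact Or.inl rfl
      | succ j => exact Or.inr ⟨j, Fin.succ_lt_succ_iff.1 hj, rfl⟩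
    · rintro (rfl | ⟨j, hj, rfl⟩)
      · exact ⟨0, Fin.succ_pos i, rfl⟩
      · exact ⟨j.succ, Fin.succ_lt_succ_iff.2 hj, rfl⟩
  unfold pSpan
  rw [h1, Ideal.span_union, Submodule.sup_smul, ← Submodule.mem_comap]
  set N := Ideal.span {x 0} • (⊤ : Submodule R M)
  have h2 : (⊤ : Submodule R (M ⧸ N)) = Submodule.map N.mkQ ⊤ := by
    rw [Submodule.map_top, Submodule.range_mkQ]
  rw [h2, ← Submodule.map_smul'', Submodule.comap_map_mkQ]

theorem weak_main [IsNoetherianRing R] (I : Ideal R) (hjac : I ≤ (⊥ : Ideal R).jacobson) :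
    ∀ (c : ℕ) (M : Type) [AddCommGroup M] [Module R M] [Module.Finite R M],
      AllSurj I c M → ∀ x : Fin c → R, (∀ k, x k ∈ I) →
      I ≤ (Ideal.span (Set.range x) ⊔ Module.annihilator R M).radical → IsWeakSeq I M x := by
  intro c
  induction c with
  | zero =>
    intro M _ _ _ hS x hx hrad i
    exact i.elim0
  | succ c ih =>
    intro M _ _ _ hS x hx hrad
    have hXle : Ideal.span (Set.range x) ≤
        Ideal.span {x 0} ⊔ Ideal.span (Set.range fun k : Fin c => x k.succ) := by
      refine Ideal.span_le.2 ?_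
      rintro _ ⟨k, rfl⟩
      refine Fin.cases ?_ (fun k => ?_) k
      · exact (le_sup_left : Ideal.span {x 0} ≤ _) (Ideal.mem_span_singleton_self _)
      · exact (le_sup_right : Ideal.span (Set.range fun k : Fin c => x k.succ) ≤ _)
          (Ideal.subset_span ⟨k, rfl⟩)
    have hrad1 := hrad.trans (Ideal.radical_mono
      (sup_le_sup_right hXle (Module.annihilator R M)))
    have h0 := first_step I hjac c M hS (x 0) (hx 0) _ (fun k => hx k.succ) hrad1
    have hQ := ih _ (hS.quot (x 0) (hx 0) h0) (fun k => x k.succ) (fun k => hx k.succ) (by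
      refine hrad1.trans (Ideal.radical_mono (sup_le (sup_le ?_ le_sup_left)
        ((ann_le_quot M _).trans le_sup_right)))
      rw [Ideal.span_singleton_le_iff_mem]
      exact Submodule.mem_sup_right (mem_ann_quot M _))
    intro i
    refine Fin.cases ?_ (fun i => ?_) i
    · intro m hm a ha
      have hbot : pSpan M x 0 = ⊥ := by
        unfold pSpan
        simp
      rw [hbot, Submodule.mem_bot] at hm ⊢
      exact h0 m hm a ha
    · intro m hm a ha
      rw [pSpan_succ, map_smul] at hm ⊢
      exact hQ i _ hm a ha

/-- **Theorem 4.2, (i) ⟹ (iii).** Suppose `I` is contained in the Jacobson radical of `R`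
and `c := cd(I,M) = ara(I,M) > 0`. If for every generating set `{b₁,…,b_t}` of `I` the
canonical map `λ^i_M : H^i(b₁,…,b_t; M) → H^i_I(M)` is surjective for all `0 ≤ i ≤ c-1`,
then `M` is `I`-relative Buchsbaum. -/
theorem theorem_4_2_i_iii [IsNoetherianRing R] (I : Ideal R)
    (hjac : I ≤ (⊥ : Ideal R).jacobson)
    (M : Type) [AddCommGroup M] [Module R M] [Module.Finite R M]
    (c : ℕ) (hc : IsCd I M c) (ha : IsAra I M c) (hpos : 0 < c)
    (hsurj : ∀ (t : ℕ) (b : Fin t → R), Ideal.span (Set.range b) = I →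
      ∀ i : ℕ, i < c → LambdaSurj b M i) :
    IsRelBuchsbaum I M := by
  refine ⟨c, hc, ha, fun x hx => weak_main I hjac c M hsurj x hx.1 ?_⟩
  have h := hx.2
  rw [Submodule.add_eq_sup, Submodule.add_eq_sup] at h
  rw [h]
  exact le_sup_left.trans Ideal.le_radical
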